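/- Let h(Q_U,n,k;·) denote the law of sampling k < n balls without replacement from an urn containing n balls of n different colours, where Q_U(j) = 1/n for j ∈ S = {1,…,n}. Then, for any mixing probability measure μ on ℳ(S), D( h(Q_U,n,k;·) ‖ M_{k,μ} ) ≥ log( n^k (n−k)! / n! ). -/

import Mathlib

open MeasureTheory
open scoped ENNReal

/-- The space `ℳ(S)` of probability measures on a measurable space `S`, equipped with
the σ-algebra `ℱ` generated by the evaluation maps `P ↦ P(A)`, `A` measurable
(obtained here as the subtype σ-algebra of the canonical σ-algebra on measures). -/
noncomputable instance probabilityMeasureMeasurableSpace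
    {α : Type*} [MeasurableSpace α] : MeasurableSpace (ProbabilityMeasure α) :=
  Subtype.instMeasurableSpace

open Classical in
/-- The Kullback–Leibler divergence (relative entropy) `D(μ‖ν)` between two measures,
defined as `∫ log (dμ/dν) dμ` when `μ ≪ ν` and this integral makes sense, and `+∞` otherwise. -/
noncomputable def klDiv {α : Type*} [MeasurableSpace α] (μ ν : Measure α) : ℝ≥0∞ :=
  if μ ≪ ν ∧ Integrable (llr μ ν) μ then ENNReal.ofReal (∫ x, llr μ ν x ∂μ) else ⊤

/-- The law `h(Q,n,k;·)` on `S^k` of the sequence of colours of `k` balls drawn uniformly at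
random *without replacement* from an urn of `n` balls whose colours are given by
`col : Fin n → Fin c` (the `n`-type `Q` describing the urn is `Q(j) = #col⁻¹(j)/n`):
the uniform average of the colour sequences over all injective sequences of `k` balls. -/
noncomputable def drawWithoutReplacement (n c k : ℕ) (col : Fin n → Fin c) :
    Measure (Fin k → Fin c) :=
  (((Finset.univ.filter (fun f : Fin k → Fin n => Function.Injective f)).card : ℝ≥0∞))⁻¹ •
    ∑ f ∈ Finset.univ.filter (fun f : Fin k → Fin n => Function.Injective f),
      Measure.dirac (col ∘ f)

/-- The single-draw colour distribution `Q` of an urn of `n` balls with colours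
`col : Fin n → Fin c`, i.e. `Q(j) = #col⁻¹(j)/n`. -/
noncomputable def urnColourDist (n c : ℕ) (col : Fin n → Fin c) : Measure (Fin c) :=
  ((n : ℝ≥0∞))⁻¹ • ∑ i : Fin n, Measure.dirac (col i)

/-- The law `b(Q,n,k;·) = Q^k` on `S^k` of `k` i.i.d. draws (*with replacement*) from the urn. -/
noncomputable def drawWithReplacement (n c k : ℕ) (col : Fin n → Fin c) :
    Measure (Fin k → Fin c) :=
  Measure.pi fun _ : Fin k => urnColourDist n c col

/-!
Gibbs' inequality applied to the restriction of `M` to an event `E` carrying `P` gives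
`D(P‖M) ≥ -log M(E)`. Take for `E` the sequences without repetition: balls drawn without
replacement from distinct colours never repeat, whereas under every `Q^k`, hence under every mixture
`M_{k,μ}`, the event `E` has probability at most `n! / (n^k (n-k)!)`, its value for uniform `Q`.

The bound on `Q^k(E)` is an instance of Maclaurin's inequality. Write `D_k` for the sum of
`q x₁ ⋯ q xₖ` over sequences of distinct elements, and `A_k` for the same sum with `q x₁` squared in
each term. Multiplying `D_k` by `∑ q` adds an element that is either new or a repetition, so
`(∑ q) D_k = D_{k+1} + k A_k`; AM–GM applied to two of the factors gives
`D_{k+1} ≤ (n - k) A_k`. Eliminating `A_k` leaves `n D_{k+1} ≤ (n - k) (∑ q) D_k`.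
-/

section DistinctSum

variable {α : Type*} [Fintype α]

lemma sum_embedding_comp_perm {ι M : Type*} [Fintype ι] [AddCommMonoid M]
    (σ : Equiv.Perm ι) (F : (ι → α) → M) :
    ∑ x : ι ↪ α, F (x ∘ σ) = ∑ x : ι ↪ α, F x :=
  (Equiv.embeddingCongr σ.symm (Equiv.refl α)).sum_comp fun x : ι ↪ α => F x

lemma sum_embedding_fin_succ [DecidableEq α] {M : Type*} [AddCommMonoid M] {k : ℕ}
    (F : (Fin (k + 1) → α) → M) :
    ∑ x : Fin (k + 1) ↪ α, F x =
      ∑ y : Fin k ↪ α, ∑ a ∈ (Finset.univ.map y)ᶜ, F (Fin.cons a y) := by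
  rw [← (Equiv.embeddingFinSucc k α).symm.sum_comp, Fintype.sum_sigma]
  refine Finset.sum_congr rfl fun y _ => ?_
  simp only [Equiv.coe_embeddingFinSucc_symm]
  exact (Finset.sum_subtype _ (by simp) fun a => F (Fin.cons a y)).symm

lemma sum_compl_map_univ [DecidableEq α] {ι M : Type*} [Fintype ι] [AddCommGroup M]
    (y : ι ↪ α) (q : α → M) :
    ∑ a ∈ (Finset.univ.map y)ᶜ, q a = ∑ a, q a - ∑ i, q (y i) := by
  rw [eq_sub_iff_add_eq, ← Finset.sum_map Finset.univ y q, Finset.sum_compl_add_sum]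

section CommSemiring

variable {R : Type*} [CommSemiring R]

/-- The sum of `q x₁ ⋯ q xₖ` over all sequences of `k` distinct elements, that is, `k!` times the
`k`-th elementary symmetric polynomial evaluated at `q`. When `q` is a probability mass function,
this is the probability that `k` independent draws from `q` are distinct. -/
noncomputable def distinctSum (q : α → R) (k : ℕ) : R :=
  ∑ x : Fin k ↪ α, ∏ i, q (x i)

lemma distinctSum_zero (q : α → R) : distinctSum q 0 = 1 := by
  simp [distinctSum]

lemma distinctSum_one (q : α → R) : distinctSum q 1 = ∑ a, q a := by
  classical
  rw [distinctSum, sum_embedding_fin_succ fun x => ∏ i, q (x i)]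
  simp

lemma distinctSum_eq_zero (q : α → R) {k : ℕ} (hk : Fintype.card α < k) :
    distinctSum q k = 0 := by
  have : IsEmpty (Fin k ↪ α) := Function.Embedding.isEmpty_of_card_lt (by simpa using hk)
  exact Fintype.sum_empty _

lemma sum_prod_mul_apply_eq (q : α → R) {k : ℕ} (i j : Fin k) :
    ∑ x : Fin k ↪ α, (∏ l, q (x l)) * q (x i) = ∑ x : Fin k ↪ α, (∏ l, q (x l)) * q (x j) := by
  classical
  rw [← sum_embedding_comp_perm (Equiv.swap i j) fun x => (∏ l, q (x l)) * q (x j)]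
  refine Finset.sum_congr rfl fun x _ => ?_
  simp only [Function.comp_apply, Equiv.swap_apply_right,
    Equiv.prod_comp (Equiv.swap i j) fun l => q (x l)]

end CommSemiring

section CommRing

variable {R : Type*} [CommRing R]

lemma sum_mul_distinctSum (q : α → R) (k : ℕ) :
    (∑ a, q a) * distinctSum q (k + 1) = distinctSum q (k + 2) +
      (k + 1) * ∑ x : Fin (k + 1) ↪ α, (∏ i, q (x i)) * q (x 0) := by
  classical
  have h_last : distinctSum q (k + 2) =
      ∑ x : Fin (k + 1) ↪ α, (∏ i, q (x i)) * (∑ a, q a - ∑ j, q (x j)) := by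
    rw [distinctSum, sum_embedding_fin_succ fun x => ∏ i, q (x i)]
    refine Finset.sum_congr rfl fun x _ => ?_
    rw [← sum_compl_map_univ, Finset.mul_sum]
    simp only [Fin.prod_univ_succ (n := k + 1), Fin.cons_zero, Fin.cons_succ, mul_comm]
  have h_repeat : ∑ x : Fin (k + 1) ↪ α, (∏ i, q (x i)) * ∑ j, q (x j) =
      (k + 1) * ∑ x : Fin (k + 1) ↪ α, (∏ i, q (x i)) * q (x 0) := by
    simp only [Finset.mul_sum (s := (Finset.univ : Finset (Fin (k + 1))))]
    rw [Finset.sum_comm]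
    simp only [sum_prod_mul_apply_eq q _ 0, Finset.sum_const, Finset.card_univ, Fintype.card_fin,
      nsmul_eq_mul, Nat.cast_add, Nat.cast_one]
  rw [h_last, ← h_repeat, ← Finset.sum_add_distrib, distinctSum, Finset.mul_sum]
  exact Finset.sum_congr rfl fun x _ => by ring

variable [LinearOrder R] [IsStrictOrderedRing R] {q : α → R}

lemma distinctSum_add_two_le (hq : ∀ a, 0 ≤ q a) (k : ℕ) :
    distinctSum q (k + 2) ≤ (Fintype.card α - (k + 1)) *
      ∑ x : Fin (k + 1) ↪ α, (∏ i, q (x i)) * q (x 0) := by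
  classical
  let r (y : Fin (k + 2) → α) : R := ∏ i : Fin k, q (y i.succ.succ)
  have h_swap : ∑ y : Fin (k + 2) ↪ α, q (y 0) ^ 2 * r y =
      ∑ y : Fin (k + 2) ↪ α, q (y 1) ^ 2 * r y := by
    rw [← sum_embedding_comp_perm (Equiv.swap 0 1) fun y => q (y 1) ^ 2 * r y]
    have h_fix (i : Fin k) : Equiv.swap (0 : Fin (k + 2)) 1 i.succ.succ = i.succ.succ :=
      Equiv.swap_apply_of_ne_of_ne (Fin.succ_ne_zero _)
        fun h => Fin.succ_ne_zero i (Fin.succ_injective _ h)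
    simp only [r, Function.comp_apply, Equiv.swap_apply_right, h_fix]
  have h_am_gm : 2 * distinctSum q (k + 2) ≤ 2 * ∑ y : Fin (k + 2) ↪ α, q (y 1) ^ 2 * r y := by
    calc 2 * distinctSum q (k + 2)
        = ∑ y : Fin (k + 2) ↪ α, 2 * q (y 0) * q (y 1) * r y := by
          rw [distinctSum, Finset.mul_sum]
          refine Finset.sum_congr rfl fun y _ => ?_
          rw [Fin.prod_univ_succ, Fin.prod_univ_succ]
          simp only [r, Fin.succ_zero_eq_one, mul_assoc]
      _ ≤ ∑ y : Fin (k + 2) ↪ α, (q (y 0) ^ 2 + q (y 1) ^ 2) * r y := by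
          gcongr with y
          · exact Finset.prod_nonneg fun _ _ => hq _
          · exact two_mul_le_add_sq _ _
      _ = 2 * ∑ y : Fin (k + 2) ↪ α, q (y 1) ^ 2 * r y := by
          simp only [add_mul, Finset.sum_add_distrib, h_swap, two_mul]
  refine (le_of_mul_le_mul_left h_am_gm two_pos).trans_eq ?_
  rw [sum_embedding_fin_succ fun y => q (y 1) ^ 2 * r y, Finset.mul_sum]
  refine Finset.sum_congr rfl fun x _ => ?_
  have h_card : (((Finset.univ.map x)ᶜ.card : ℕ) : R) = Fintype.card α - (k + 1) := by
    rw [eq_sub_iff_add_eq, ← Finset.card_compl_add_card (Finset.univ.map x)]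
    simp
  simp only [r, ← Fin.succ_zero_eq_one, Fin.cons_succ, Finset.sum_const, nsmul_eq_mul, h_card,
    Fin.prod_univ_succ]
  ring

lemma card_mul_distinctSum_succ_le (hq : ∀ a, 0 ≤ q a) (k : ℕ) :
    Fintype.card α * distinctSum q (k + 1) ≤
      (Fintype.card α - k) * ((∑ a, q a) * distinctSum q k) := by
  cases k with
  | zero => simp [distinctSum_zero, distinctSum_one]
  | succ k =>
    have h_le := mul_le_mul_of_nonneg_left (distinctSum_add_two_le hq k)
      (by positivity : (0 : R) ≤ k + 1)
    rw [sum_mul_distinctSum]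
    push_cast
    linarith

theorem card_pow_mul_distinctSum_le (hq : ∀ a, 0 ≤ q a) (k : ℕ) :
    Fintype.card α ^ k * distinctSum q k ≤ (Fintype.card α).descFactorial k * (∑ a, q a) ^ k := by
  have h_sum : 0 ≤ ∑ a, q a := Finset.sum_nonneg fun a _ => hq a
  induction k with
  | zero => simp [distinctSum_zero]
  | succ k ih =>
    rcases le_or_gt (k + 1) (Fintype.card α) with hk | hk
    · have h_sub : (0 : R) ≤ Fintype.card α - k := sub_nonneg.2 (by exact_mod_cast (by omega))
      rw [Nat.descFactorial_succ, Nat.cast_mul, Nat.cast_sub (by omega)]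
      calc (Fintype.card α : R) ^ (k + 1) * distinctSum q (k + 1)
          = Fintype.card α ^ k * (Fintype.card α * distinctSum q (k + 1)) := by ring
        _ ≤ Fintype.card α ^ k * ((Fintype.card α - k) * ((∑ a, q a) * distinctSum q k)) :=
          mul_le_mul_of_nonneg_left (card_mul_distinctSum_succ_le hq k) (by positivity)
        _ = (Fintype.card α - k) * (∑ a, q a) * (Fintype.card α ^ k * distinctSum q k) := by ring
        _ ≤ (Fintype.card α - k) * (∑ a, q a) *
            ((Fintype.card α).descFactorial k * (∑ a, q a) ^ k) := by gcongr
        _ = (Fintype.card α - k) * (Fintype.card α).descFactorial k * (∑ a, q a) ^ (k + 1) := by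
          ring
    · rw [distinctSum_eq_zero q hk, mul_zero]
      positivity

end CommRing

end DistinctSum

section Collision

variable {α : Type*} [Fintype α] [MeasurableSpace α] [MeasurableSingletonClass α]

lemma pi_real_setOf_injective (Q : Measure α) [SigmaFinite Q] (k : ℕ) :
    (Measure.pi fun _ : Fin k => Q).real {x | Function.Injective x} =
      distinctSum (fun a => Q.real {a}) k := by
  let e : (Fin k ↪ α) ↪ (Fin k → α) := ⟨DFunLike.coe, DFunLike.coe_injective⟩
  have h_range : {x : Fin k → α | Function.Injective x} = Finset.univ.map e := by
    ext x
    simpa [e] using ⟨fun hx => ⟨⟨x, hx⟩, rfl⟩, fun ⟨y, hy⟩ => hy ▸ y.injective⟩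
  rw [h_range, ← sum_measureReal_singleton, Finset.sum_map, distinctSum]
  refine Finset.sum_congr rfl fun x _ => ?_
  simp [e, measureReal_def, Measure.pi_singleton, ENNReal.toReal_prod]

theorem pi_real_setOf_injective_le (Q : Measure α) [IsProbabilityMeasure Q] (k : ℕ) :
    (Measure.pi fun _ : Fin k => Q).real {x | Function.Injective x} ≤
      (Fintype.card α).descFactorial k / Fintype.card α ^ k := by
  have : Nonempty α := nonempty_of_isProbabilityMeasure Q
  have h_total : ∑ a, Q.real {a} = 1 := by simp [sum_measureReal_singleton]
  rw [pi_real_setOf_injective, le_div_iff₀' (by positivity)]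
  simpa [h_total] using
    card_pow_mul_distinctSum_le (q := fun a => Q.real {a}) (fun _ => measureReal_nonneg) k

lemma mixture_real_setOf_injective_le {k : ℕ}
    (μ : Measure (ProbabilityMeasure α)) [IsProbabilityMeasure μ] {M : Measure (Fin k → α)}
    (hM : ∀ A : Set (Fin k → α), MeasurableSet A →
        M A = ∫⁻ Q : ProbabilityMeasure α,
          Measure.pi (fun _ : Fin k => (Q : Measure α)) A ∂μ) :
    M.real {x | Function.Injective x} ≤
      (Fintype.card α).descFactorial k / Fintype.card α ^ k := by
  refine ENNReal.toReal_le_of_le_ofReal (by positivity) ?_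
  rw [hM _ (Set.toFinite _).measurableSet]
  refine lintegral_le_const (ae_of_all _ fun Q => ?_)
  rw [← ofReal_measureReal]
  exact ENNReal.ofReal_le_ofReal (pi_real_setOf_injective_le (Q : Measure α) k)

end Collision

section RelativeEntropy

variable {Ω : Type*} [MeasurableSpace Ω] {P M : Measure Ω} {E : Set Ω}

lemma absolutelyContinuous_restrict_of_ae_mem (hPM : P ≪ M) (hPE : ∀ᵐ x ∂P, x ∈ E) :
    P ≪ M.restrict E := by
  simpa only [Measure.restrict_eq_self_of_ae_mem hPE] using hPM.restrict E

lemma rnDeriv_restrict_right_ae_eq [SFinite P] [SigmaFinite M] (hPM : P ≪ M)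
    (hE : MeasurableSet E) (hPE : ∀ᵐ x ∂P, x ∈ E) :
    P.rnDeriv (M.restrict E) =ᵐ[P] P.rnDeriv M := by
  have h_density : (M.restrict E).withDensity (P.rnDeriv M) = P := by
    rw [← restrict_withDensity hE, Measure.withDensity_rnDeriv_eq P M hPM,
      Measure.restrict_eq_self_of_ae_mem hPE]
  have h_rnDeriv := Measure.rnDeriv_withDensity (M.restrict E) (Measure.measurable_rnDeriv P M)
  rw [h_density] at h_rnDeriv
  exact (absolutelyContinuous_restrict_of_ae_mem hPM hPE).ae_le h_rnDeriv

variable [IsProbabilityMeasure P] [IsFiniteMeasure M]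

theorem neg_log_measureReal_le_integral_llr (hPM : P ≪ M) (h_int : Integrable (llr P M) P)
    (hE : MeasurableSet E) (hPE : ∀ᵐ x ∂P, x ∈ E) :
    -Real.log (M.real E) ≤ ∫ x, llr P M x ∂P := by
  have h_llr : llr P (M.restrict E) =ᵐ[P] llr P M := by
    filter_upwards [rnDeriv_restrict_right_ae_eq hPM hE hPE] with x hx
    rw [llr, llr, hx]
  have h_gibbs := InformationTheory.integral_llr_add_mul_log_nonneg
    (absolutelyContinuous_restrict_of_ae_mem hPM hPE) ((integrable_congr h_llr).2 h_int)
  rw [integral_congr_ae h_llr, probReal_univ, measureReal_restrict_apply_univ] at h_gibbs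
  linarith

theorem ofReal_log_inv_le_klDiv (hE : MeasurableSet E) (hPE : ∀ᵐ x ∂P, x ∈ E) {c : ℝ}
    (hME : M.real E ≤ c) :
    ENNReal.ofReal (Real.log c⁻¹) ≤ klDiv P M := by
  unfold klDiv
  split_ifs with h
  · have hM_ne : M.restrict E ≠ 0 := fun h_zero =>
      IsProbabilityMeasure.ne_zero P <| Measure.absolutelyContinuous_zero_iff.1 <|
        h_zero ▸ absolutelyContinuous_restrict_of_ae_mem h.1 hPE
    have hM_pos : 0 < M.real E :=
      ENNReal.toReal_pos (mt Measure.restrict_eq_zero.2 hM_ne) (measure_ne_top M E)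
    refine ENNReal.ofReal_le_ofReal ?_
    calc Real.log c⁻¹ = -Real.log c := Real.log_inv c
      _ ≤ -Real.log (M.real E) := neg_le_neg (Real.log_le_log hM_pos hME)
      _ ≤ ∫ x, llr P M x ∂P := neg_log_measureReal_le_integral_llr h.1 h.2 hE hPE
  · exact le_top

end RelativeEntropy

section Urn

variable {n c k : ℕ}

lemma isProbabilityMeasure_drawWithoutReplacement (hk : k ≤ n) (col : Fin n → Fin c) :
    IsProbabilityMeasure (drawWithoutReplacement n c k col) := by
  let s := Finset.univ.filter fun f : Fin k → Fin n => Function.Injective f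
  have hs : (s.card : ℝ≥0∞) ≠ 0 := by
    have h_mem : Fin.castLE hk ∈ s := by simpa [s] using Fin.castLE_injective hk
    exact_mod_cast (Finset.card_pos.2 ⟨_, h_mem⟩).ne'
  refine ⟨?_⟩
  change ((s.card : ℝ≥0∞)⁻¹ • ∑ f ∈ s, Measure.dirac (col ∘ f)) Set.univ = 1
  simp [Measure.finsetSum_apply, ENNReal.inv_mul_cancel hs]

lemma ae_injective_drawWithoutReplacement {col : Fin n → Fin c} (hcol : Function.Injective col) :
    ∀ᵐ x ∂drawWithoutReplacement n c k col, Function.Injective x := by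
  refine Measure.ae_smul_measure (ae_finsetSum_measure_iff.2 fun f hf => ?_) _
  simpa [ae_dirac_iff] using hcol.comp (Finset.mem_filter.1 hf).2

end Urn

lemma inv_descFactorial_div_pow {n k : ℕ} (hk : k ≤ n) :
    ((n.descFactorial k : ℝ) / n ^ k)⁻¹ = n ^ k * (n - k).factorial / n.factorial := by
  rw [inv_div, ← Nat.factorial_mul_descFactorial hk, Nat.cast_mul, mul_comm ((n : ℝ) ^ k),
    mul_div_mul_left _ _ (Nat.cast_ne_zero.2 (Nat.factorial_ne_zero _))]

theorem deFinetti_relEntropy_converse_general {α : Type*} [Fintype α] [MeasurableSpace α]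
    [MeasurableSingletonClass α] {k : ℕ} {P : Measure (Fin k → α)} [IsProbabilityMeasure P]
    (hP : ∀ᵐ x ∂P, Function.Injective x)
    (μ : Measure (ProbabilityMeasure α)) [IsProbabilityMeasure μ] {M : Measure (Fin k → α)}
    (hM : ∀ A : Set (Fin k → α), MeasurableSet A →
        M A = ∫⁻ Q : ProbabilityMeasure α,
          Measure.pi (fun _ : Fin k => (Q : Measure α)) A ∂μ) :
    ENNReal.ofReal (Real.log ((Fintype.card α : ℝ) ^ k * (Fintype.card α - k).factorial /
      (Fintype.card α).factorial)) ≤ klDiv P M := by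
  have hM_prob : IsProbabilityMeasure M := ⟨by rw [hM _ MeasurableSet.univ]; simp⟩
  have hk : k ≤ Fintype.card α := by
    obtain ⟨x, hx⟩ := hP.exists
    simpa using Fintype.card_le_of_injective x hx
  rw [← inv_descFactorial_div_pow hk]
  exact ofReal_log_inv_le_klDiv (Set.toFinite _).measurableSet hP
    (mixture_real_setOf_injective_le μ hM)

/-- **Tightness of the finite de Finetti bound** (Song–Attiah–Yu). Let `h(Q_U,n,k;·)` be
the law of sampling `k < n` balls without replacement from an urn of `n` balls of `n`
different colours. Then, for any mixing probability measure `μ` on `ℳ(S)`, `S = {1,…,n}`,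
`D(h(Q_U,n,k;·) ‖ M_{k,μ}) ≥ log (n^k (n−k)!/n!)`, where `M_{k,μ}` is the mixture of
i.i.d. measures `M_{k,μ}(A) = ∫ Q^k(A) dμ(Q)`. -/
theorem deFinetti_relEntropy_converse {n k : ℕ} (hn : 0 < n) (hk : k < n)
    (μ : Measure (ProbabilityMeasure (Fin n))) [IsProbabilityMeasure μ]
    (M : Measure (Fin k → Fin n))
    (hM : ∀ A : Set (Fin k → Fin n), MeasurableSet A →
        M A = ∫⁻ Q : ProbabilityMeasure (Fin n),
          Measure.pi (fun _ : Fin k => (Q : Measure (Fin n))) A ∂μ) :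
    ENNReal.ofReal (Real.log ((n : ℝ) ^ k * (n - k).factorial / n.factorial)) ≤
      klDiv (drawWithoutReplacement n n k id) M := by
  have := isProbabilityMeasure_drawWithoutReplacement hk.le (id : Fin n → Fin n)
  simpa using deFinetti_relEntropy_converse_general
    (ae_injective_drawWithoutReplacement Function.injective_id) μ hM
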